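/- Assume max_i|b_i| > 0 and let d* = 2·max_i|b_i|/(1−λ)². Let M be a positive integer and α₀,…,α_M, β₀,…,β_M finite words over {1,…,m}, and let (q_k,c_k)_{k=1}^{M+1} be the sequence with the recursive structure w.r.t. ({α_k},{β_k}). If q_k ≥ 0 for all 1 ≤ k ≤ M+1 and c_{M+1} = 0, then |c_k| < d* for all 1 ≤ k ≤ M+1. -/

import Mathlib

open Polynomial Filter

noncomputable section

namespace PVOSC

variable {m : ℕ}

/-- `λ⁻¹` is a Pisot (P.V.) number: an algebraic integer `> 1` all of whose
Galois conjugates other than itself have complex absolute value `< 1`. -/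
def IsPisot (θ : ℝ) : Prop :=
  1 < θ ∧ IsIntegral ℤ θ ∧
    ∀ z : ℂ, aeval z (minpoly ℤ θ) = 0 → z ≠ (θ : ℂ) → ‖z‖ < 1

/-- `p_σ` for a finite word `σ`. -/
def wordP (p : Fin m → ℕ) (σ : List (Fin m)) : ℕ := (σ.map p).sum

/-- The contracting similitude `S_i(x) = λ^{p_i} x + b_i`. -/
def Smap (lam : ℝ) (p : Fin m → ℕ) (b : Fin m → ℝ) (i : Fin m) : ℝ → ℝ :=
  fun x => lam ^ p i * x + b i

/-- `S_σ = S_{i₁} ∘ ⋯ ∘ S_{i_k}` for `σ = i₁ ⋯ i_k`. -/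
def SW (lam : ℝ) (p : Fin m → ℕ) (b : Fin m → ℝ) (σ : List (Fin m)) : ℝ → ℝ :=
  σ.foldr (fun i f => Smap lam p b i ∘ f) id

/-- `b_σ`, the translation part of `S_σ`. -/
def wordB (lam : ℝ) (p : Fin m → ℕ) (b : Fin m → ℝ) (σ : List (Fin m)) : ℝ :=
  SW lam p b σ 0

/-- `B = {0, b₁, …, b_m}`. -/
def Bset (b : Fin m → ℝ) : Set ℝ := insert 0 (Set.range b)

/-- `B − B`. -/
def BB (b : Fin m → ℝ) : Set ℝ := {x | ∃ u ∈ Bset b, ∃ v ∈ Bset b, x = u - v}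

/-- `max_i |b_i|`. -/
def bmax (b : Fin m → ℝ) : ℝ := ⨆ i, |b i|

/-- The set `𝒞`. -/
def Cset (lam : ℝ) (b : Fin m → ℝ) (T : ℕ) : Set ℝ :=
  {x | |x| ≤ (1 + lam ^ (1 - (T : ℤ))) * bmax b / (1 - lam) ∧
    ∃ R : ℝ[X], (∀ n, R.coeff n ∈ BB b) ∧ lam ^ (2 - (T : ℤ)) * x = R.eval lam⁻¹}

/-- The vertex set `Ξ = {n ∈ ℤ : |n| ≤ T−1} × 𝒞`. -/
def Xi (lam : ℝ) (b : Fin m → ℝ) (T : ℕ) : Set (ℤ × ℝ) :=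
  {v | |v.1| ≤ (T : ℤ) - 1 ∧ v.2 ∈ Cset lam b T}

/-- The open set condition. -/
def OSC (lam : ℝ) (p : Fin m → ℕ) (b : Fin m → ℝ) : Prop :=
  ∃ U : Set ℝ, U.Nonempty ∧ IsOpen U ∧ (⋃ i, Smap lam p b i '' U) ⊆ U ∧
    ∀ i j : Fin m, i ≠ j → Smap lam p b i '' U ∩ Smap lam p b j '' U = ∅

/-- The strong separation condition for the attractor `E`. -/
def SSC (lam : ℝ) (p : Fin m → ℕ) (b : Fin m → ℝ) (E : Set ℝ) : Prop :=
  ∀ i j : Fin m, i ≠ j → Smap lam p b i '' E ∩ Smap lam p b j '' E = ∅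

/-- Group law on `ℤ × ℝ`: `(p₁,c₁)·(p₂,c₂) = (p₁+p₂, λ^{p₁} c₂ + c₁)`. -/
def gmul (lam : ℝ) (u v : ℤ × ℝ) : ℤ × ℝ := (u.1 + v.1, lam ^ u.1 * v.2 + u.2)

/-- Inverse for the group law: `(p,c)⁻¹ = (−p, −λ^{−p} c)`. -/
def ginv (lam : ℝ) (u : ℤ × ℝ) : ℤ × ℝ := (-u.1, -(lam ^ (-u.1) * u.2))

/-- The group element `(p_σ, b_σ)` associated to a finite word `σ`. -/
def elem (lam : ℝ) (p : Fin m → ℕ) (b : Fin m → ℝ) (σ : List (Fin m)) : ℤ × ℝ :=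
  ((wordP p σ : ℤ), wordB lam p b σ)

/-- The sequence `(q_k, c_k)` with the recursive structure w.r.t. `({α_k}, {β_k})`:
`recSeq … k = (q_{k+1}, c_{k+1})`, i.e. index `k` corresponds to `(q_{k+1}, c_{k+1})`. -/
def recSeq (lam : ℝ) (p : Fin m → ℕ) (b : Fin m → ℝ) (α β : ℕ → List (Fin m)) : ℕ → ℤ × ℝ
  | 0 => gmul lam (ginv lam (elem lam p b (β 0))) (elem lam p b (α 0))
  | (k+1) => gmul lam (ginv lam (elem lam p b (β (k+1))))
      (gmul lam (recSeq lam p b α β k) (elem lam p b (α (k+1))))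

/-- The edge relation of the directed graph `G` on `Ξ`. -/
def edge (lam : ℝ) (p : Fin m → ℕ) (b : Fin m → ℝ) (T : ℕ) (u v : ℤ × ℝ) : Prop :=
  u ∈ Xi lam b T ∧ v ∈ Xi lam b T ∧
    ∃ α β : List (Fin m), 1 ≤ wordP p α ∧ wordP p α ≤ 2 * T - 1 ∧
      1 ≤ wordP p β ∧ wordP p β ≤ 2 * T - 1 ∧
      v.1 = (wordP p α : ℤ) + u.1 - (wordP p β : ℤ) ∧
      v.2 = lam ^ (-(wordP p β : ℤ)) * u.2 + lam ^ (u.1 - (wordP p β : ℤ)) * wordB lam p b α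
        - lam ^ (-(wordP p β : ℤ)) * wordB lam p b β

/-- `Λ = Ξ ∩ {(p_j − p_i, λ^{−p_i}(b_j − b_i)) : i ≠ j}`. -/
def Lam (lam : ℝ) (p : Fin m → ℕ) (b : Fin m → ℝ) (T : ℕ) : Set (ℤ × ℝ) :=
  Xi lam b T ∩ {v | ∃ i j : Fin m, i ≠ j ∧
    v = ((p j : ℤ) - (p i : ℤ), lam ^ (-(p i : ℤ)) * (b j - b i))}

/-- The length-`k` prefix of an infinite word `ω`. -/
def prefixList (ω : ℕ → Fin m) (k : ℕ) : List (Fin m) := (List.range k).map ω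

/-!
Cancelling `(p_{β_k}, b_{β_k})⁻¹` in the recursion gives
`c_k = λ^{p_{β_k}} c_{k+1} + b_{β_k} - λ^{q_k} b_{α_k}`. Every `b_σ` is bounded by
`max |b_i| / (1 - λ)`, as a value of a composition of maps that each keep the interval of that
radius invariant. Since `q_k ≥ 0` and `p_{β_k} ≥ 1`, this yields
`|c_k| ≤ λ |c_{k+1}| + 2 max |b_i| / (1 - λ)`: running backwards, the recursion contracts towards
its fixed point `d*`, and so a bound by `d*` propagates from the last index to all earlier ones.
-/

theorem mul_div_one_sub_add {K : Type*} [Field K] {r : K} (hr : r ≠ 1) (C : K) :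
    r * (C / (1 - r)) + C = C / (1 - r) := by
  have : 1 - r ≠ 0 := sub_ne_zero.mpr hr.symm
  field_simp
  ring

theorem lt_div_one_sub_of_le_mul_succ_add {K : Type*} [Field K] [LinearOrder K]
    [IsStrictOrderedRing K] {r C : K} (hr0 : 0 < r) (hr1 : r < 1) {a : ℕ → K} {M : ℕ}
    (hstep : ∀ k < M, a k ≤ r * a (k + 1) + C) (hlast : a M < C / (1 - r)) {k : ℕ} (hk : k ≤ M) :
    a k < C / (1 - r) := by
  induction hk using Nat.decreasingInduction with
  | self => exact hlast
  | of_succ k hk ih =>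
    calc a k ≤ r * a (k + 1) + C := hstep k hk
      _ < r * (C / (1 - r)) + C := by gcongr
      _ = C / (1 - r) := mul_div_one_sub_add hr1.ne C

theorem gmul_ginv_cancel_left {lam : ℝ} (hlam : lam ≠ 0) (u v : ℤ × ℝ) :
    gmul lam u (gmul lam (ginv lam u) v) = v := by
  ext
  · simp [gmul, ginv]
  · simp only [gmul, ginv, zpow_neg]
    field_simp
    ring

theorem abs_le_bmax (b : Fin m → ℝ) (i : Fin m) : |b i| ≤ bmax b :=
  le_ciSup (f := fun i => |b i|) (Set.finite_range _).bddAbove i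

theorem bmax_nonneg (b : Fin m → ℝ) : 0 ≤ bmax b :=
  Real.iSup_nonneg fun i => abs_nonneg (b i)

theorem wordB_cons (lam : ℝ) (p : Fin m → ℕ) (b : Fin m → ℝ) (i : Fin m) (σ : List (Fin m)) :
    wordB lam p b (i :: σ) = lam ^ p i * wordB lam p b σ + b i :=
  rfl

theorem wordP_pos {p : Fin m → ℕ} (hp : ∀ i, 1 ≤ p i) {σ : List (Fin m)} (hσ : σ ≠ []) :
    0 < wordP p σ := by
  obtain ⟨i, τ, rfl⟩ := List.exists_cons_of_ne_nil hσ
  simp only [wordP, List.map_cons, List.sum_cons]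
  exact Nat.add_pos_left (hp i) _

theorem gmul_elem_recSeq_succ {lam : ℝ} (hlam : lam ≠ 0) (p : Fin m → ℕ) (b : Fin m → ℝ)
    (α β : ℕ → List (Fin m)) (k : ℕ) :
    gmul lam (elem lam p b (β (k + 1))) (recSeq lam p b α β (k + 1)) =
      gmul lam (recSeq lam p b α β k) (elem lam p b (α (k + 1))) :=
  gmul_ginv_cancel_left hlam _ _

theorem abs_wordB_le {lam : ℝ} (hlam0 : 0 < lam) (hlam1 : lam < 1) {p : Fin m → ℕ}
    (hp : ∀ i, 1 ≤ p i) (b : Fin m → ℝ) (σ : List (Fin m)) :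
    |wordB lam p b σ| ≤ bmax b / (1 - lam) := by
  induction σ with
  | nil =>
    have hnil : wordB lam p b [] = 0 := rfl
    rw [hnil, abs_zero]
    exact div_nonneg (bmax_nonneg b) (sub_pos.mpr hlam1).le
  | cons i σ ih =>
    have hpow : lam ^ p i ≤ lam :=
      pow_le_of_le_one hlam0.le hlam1.le (Nat.one_le_iff_ne_zero.mp (hp i))
    calc |wordB lam p b (i :: σ)|
        ≤ |lam ^ p i * wordB lam p b σ| + |b i| := by
          rw [wordB_cons]
          exact abs_add_le _ _
      _ = lam ^ p i * |wordB lam p b σ| + |b i| := by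
          rw [abs_mul, abs_of_pos (pow_pos hlam0 _)]
      _ ≤ lam * (bmax b / (1 - lam)) + bmax b := by
          gcongr
          exact abs_le_bmax b i
      _ = bmax b / (1 - lam) := mul_div_one_sub_add hlam1.ne _

theorem abs_snd_le_of_gmul_elem_eq {lam : ℝ} (hlam0 : 0 < lam) (hlam1 : lam < 1) {p : Fin m → ℕ}
    (hp : ∀ i, 1 ≤ p i) (b : Fin m → ℝ) {u v : ℤ × ℝ} {σ τ : List (Fin m)}
    (hτ : τ ≠ []) (hu : 0 ≤ u.1)
    (h : gmul lam (elem lam p b τ) v = gmul lam u (elem lam p b σ)) :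
    |u.2| ≤ lam * |v.2| + 2 * bmax b / (1 - lam) := by
  have hsnd : lam ^ wordP p τ * v.2 + wordB lam p b τ = lam ^ u.1 * wordB lam p b σ + u.2 := by
    simpa only [gmul, elem, zpow_natCast] using congrArg Prod.snd h
  have hv : |lam ^ wordP p τ * v.2| ≤ lam * |v.2| := by
    rw [abs_mul, abs_of_pos (pow_pos hlam0 _)]
    gcongr
    exact pow_le_of_le_one hlam0.le hlam1.le (wordP_pos hp hτ).ne'
  have hτB : |wordB lam p b τ| ≤ bmax b / (1 - lam) := abs_wordB_le hlam0 hlam1 hp b τ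
  have hσB : |lam ^ u.1 * wordB lam p b σ| ≤ bmax b / (1 - lam) := by
    rw [abs_mul, abs_of_pos (zpow_pos hlam0 _)]
    exact (mul_le_of_le_one_left (abs_nonneg _) (zpow_le_one₀ hlam0 hlam1.le hu)).trans
      (abs_wordB_le hlam0 hlam1 hp b σ)
  calc |u.2| = |lam ^ wordP p τ * v.2 + wordB lam p b τ - lam ^ u.1 * wordB lam p b σ| := by
        rw [hsnd, add_sub_cancel_left]
    _ ≤ |lam ^ wordP p τ * v.2| + |wordB lam p b τ| + |lam ^ u.1 * wordB lam p b σ| :=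
        (abs_sub _ _).trans (by gcongr; exact abs_add_le _ _)
    _ ≤ lam * |v.2| + bmax b / (1 - lam) + bmax b / (1 - lam) := by gcongr
    _ = lam * |v.2| + 2 * bmax b / (1 - lam) := by ring

theorem stmt16_general {lam : ℝ} (hlam0 : 0 < lam) (hlam1 : lam < 1) {p : Fin m → ℕ}
    (hp : ∀ i, 1 ≤ p i) (b : Fin m → ℝ) {M : ℕ} {α β : ℕ → List (Fin m)}
    (hβ : ∀ k < M, β (k + 1) ≠ [])
    (hq : ∀ k < M, 0 ≤ (recSeq lam p b α β k).1)
    (hlast : |(recSeq lam p b α β M).2| < 2 * bmax b / (1 - lam) ^ 2) {k : ℕ} (hk : k ≤ M) :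
    |(recSeq lam p b α β k).2| < 2 * bmax b / (1 - lam) ^ 2 := by
  rw [sq, ← div_div] at hlast ⊢
  refine lt_div_one_sub_of_le_mul_succ_add (a := fun k => |(recSeq lam p b α β k).2|)
    hlam0 hlam1 (fun k hkM => ?_) hlast hk
  exact abs_snd_le_of_gmul_elem_eq hlam0 hlam1 hp b (hβ k hkM) (hq k hkM)
    (gmul_elem_recSeq_succ hlam0.ne' p b α β k)

theorem stmt16 (lam : ℝ) (hlam0 : 0 < lam) (hlam1 : lam < 1)
    {m : ℕ} (hm : 2 ≤ m) (p : Fin m → ℕ) (hp : ∀ i, 1 ≤ p i)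
    (b : Fin m → ℝ) (hbZ : ∀ i, ∃ z : ℤ, b i = (z : ℝ))
    (hbpos : 0 < bmax b)
    (M : ℕ) (hM : 1 ≤ M) (α β : ℕ → List (Fin m))
    (hne : ∀ k : ℕ, k ≤ M → α k ≠ [] ∧ β k ≠ [])
    (hq : ∀ k : ℕ, k ≤ M → 0 ≤ (recSeq lam p b α β k).1)
    (hlast : (recSeq lam p b α β M).2 = 0) :
    ∀ k : ℕ, k ≤ M → |(recSeq lam p b α β k).2| < 2 * bmax b / (1 - lam) ^ 2 := by
  have hdstar : 0 < 2 * bmax b / (1 - lam) ^ 2 :=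
    div_pos (mul_pos two_pos hbpos) (pow_pos (sub_pos.mpr hlam1) 2)
  exact fun k => stmt16_general hlam0 hlam1 hp b (fun k hk => (hne (k + 1) hk).2)
    (fun k hk => hq k hk.le) (by rwa [hlast, abs_zero])

end PVOSC
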